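/- In the group Γ the following hold: (a∘c)^2 = (α∘γ)^2, (a∘b)^4 = (α∘β)^4, and (b∘c)^4 = id; the element a∘b has order 8, the element a∘c has order 4, and the element b∘c has order 4; moreover the element a∘c∘γ has order 2 and the element a∘α∘b∘β has order 4. -/

import Mathlib

/-!
A bijection of `X*` that permutes the first letter by `σ` and then acts on the rest of the word in
a way depending on that letter is a product `rooted σ * ofSections s`, where `rooted` and
`ofSections` are group homomorphisms and `ofSections s * rooted σ = rooted σ * ofSections (s ∘ σ)`.
The six generators have this form, so for an involution `σ` the square of such a product is
`ofSections (s ∘ σ * s)`. Repeated squaring thereby moves each relation down to relations between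
shorter products; for instance `(a c)²` and `(α γ)²` both have all their sections equal to `β`.

The remaining relations reproduce themselves under taking sections: up to relations already known,
the sections of `[b, β]` and `[c, γ]` are trivial or one of these two commutators, those of `b²` and
`c²` are trivial or one of these two squares, likewise for `β²` and `γ²`, and those of `(b c)⁴` are
trivial or its inverse. Such relations hold because a set of bijections that keep the first letter
and have their sections in the subgroup generated by the set consists of the identity alone. For
the lower bounds on the orders, one descends through the sections of the relevant power to a
bijection that moves the first letter.
-/

/-- The alphabet `X = {1,2,3,4}`, encoded as `Fin 4` (letter i ↔ `i-1`). -/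
abbrev Alph : Type := Fin 4

/-- The set `X*` of finite words over the alphabet. -/
abbrev Word : Type := List Alph

/-- The permutation σ = (12)(34) of the alphabet. -/
def permSigma : Alph → Alph := ![1, 0, 3, 2]

/-- The permutation π = (13)(24) of the alphabet. -/
def permPi : Alph → Alph := ![2, 3, 0, 1]

/-- A system of six bijections α, β, γ, a, b, c of `X*` satisfying the defining
recursions (each fixes the empty word; the recursions uniquely determine them). -/
structure NekSystem where
  α : Equiv.Perm Word
  β : Equiv.Perm Word
  γ : Equiv.Perm Word
  a : Equiv.Perm Word
  b : Equiv.Perm Word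
  c : Equiv.Perm Word
  hαnil : α [] = []
  hβnil : β [] = []
  hγnil : γ [] = []
  hanil : a [] = []
  hbnil : b [] = []
  hcnil : c [] = []
  hα : ∀ (x : Alph) (w : Word), α (x :: w) = permSigma x :: w
  ha : ∀ (x : Alph) (w : Word), a (x :: w) = permPi x :: w
  hβ0 : ∀ w : Word, β (0 :: w) = 0 :: α w
  hβ1 : ∀ w : Word, β (1 :: w) = 1 :: γ w
  hβ2 : ∀ w : Word, β (2 :: w) = 2 :: α w
  hβ3 : ∀ w : Word, β (3 :: w) = 3 :: γ w
  hγ0 : ∀ w : Word, γ (0 :: w) = 0 :: β w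
  hγ1 : ∀ w : Word, γ (1 :: w) = 1 :: w
  hγ2 : ∀ w : Word, γ (2 :: w) = 2 :: w
  hγ3 : ∀ w : Word, γ (3 :: w) = 3 :: β w
  hb0 : ∀ w : Word, b (0 :: w) = 0 :: a (α w)
  hb1 : ∀ w : Word, b (1 :: w) = 1 :: a (α w)
  hb2 : ∀ w : Word, b (2 :: w) = 2 :: c w
  hb3 : ∀ w : Word, b (3 :: w) = 3 :: c w
  hc0 : ∀ w : Word, c (0 :: w) = 0 :: b (β w)
  hc1 : ∀ w : Word, c (1 :: w) = 1 :: b (β w)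
  hc2 : ∀ w : Word, c (2 :: w) = 2 :: b w
  hc3 : ∀ w : Word, c (3 :: w) = 3 :: b w

theorem mul_pow_eq_conj {G : Type*} [Group G] (g h : G) (n : ℕ) :
    (h * g) ^ n = g⁻¹ * (g * h) ^ n * g := by
  simpa [mul_assoc] using conj_pow (a := g⁻¹) (b := g * h) (i := n)

theorem mul_pow_eq_of_commute {G : Type*} [Group G] {g h : G} {n : ℕ}
    (hc : Commute g ((g * h) ^ n)) : (h * g) ^ n = (g * h) ^ n := by
  rw [mul_pow_eq_conj, mul_assoc, ← hc.eq, inv_mul_cancel_left]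

theorem mul_pow_eq_one_comm {G : Type*} [Group G] {g h : G} {n : ℕ} :
    (h * g) ^ n = 1 ↔ (g * h) ^ n = 1 := by
  rw [mul_pow_eq_conj]
  simpa using conj_eq_one_iff (a := g⁻¹) (b := (g * h) ^ n)

section Sections

variable {X : Type*}

/-- The bijection of words that applies a permutation of the alphabet to the first letter and keeps
the other letters, as a homomorphism in the permutation. -/
def rooted : Equiv.Perm X →* Equiv.Perm (List X) where
  toFun σ :=
    { toFun := List.modifyHead σ
      invFun := List.modifyHead σ.symm
      left_inv w := by cases w <;> simp
      right_inv w := by cases w <;> simp }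
  map_one' := by ext1 w; cases w <;> rfl
  map_mul' σ τ := by ext1 w; cases w <;> rfl

/-- The bijection of words that keeps the first letter `x` and applies `s x` to the rest of the
word, as a homomorphism in the family `s` of sections. -/
def ofSections : (X → Equiv.Perm (List X)) →* Equiv.Perm (List X) where
  toFun s :=
    { toFun
        | [] => []
        | x :: w => x :: s x w
      invFun
        | [] => []
        | x :: w => x :: (s x).symm w
      left_inv w := by cases w <;> simp
      right_inv w := by cases w <;> simp }
  map_one' := by ext1 w; cases w <;> rfl
  map_mul' s t := by ext1 w; cases w <;> rfl

theorem ofSections_apply_cons (s : X → Equiv.Perm (List X)) (x : X) (w : List X) :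
    ofSections s (x :: w) = x :: s x w :=
  rfl

theorem eq_rooted {g : Equiv.Perm (List X)} {σ : Equiv.Perm X} (hnil : g [] = [])
    (hcons : ∀ x w, g (x :: w) = σ x :: w) : g = rooted σ := by
  ext1 w
  cases w with
  | nil => exact hnil
  | cons x w => exact hcons x w

theorem eq_ofSections {g : Equiv.Perm (List X)} {s : X → Equiv.Perm (List X)} (hnil : g [] = [])
    (hcons : ∀ x w, g (x :: w) = x :: s x w) : g = ofSections s := by
  ext1 w
  cases w with
  | nil => exact hnil
  | cons x w => exact hcons x w

open scoped commutatorElement in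
theorem commutatorElement_ofSections (s t : X → Equiv.Perm (List X)) :
    ⁅ofSections s, ofSections t⁆ = ofSections fun x => ⁅s x, t x⁆ :=
  (map_commutatorElement ofSections s t).symm

theorem ofSections_mul_rooted (s : X → Equiv.Perm (List X)) (σ : Equiv.Perm X) :
    ofSections s * rooted σ = rooted σ * ofSections (s ∘ σ) := by
  ext1 w
  cases w <;> rfl

theorem commute_rooted_ofSections {s : X → Equiv.Perm (List X)} {σ : Equiv.Perm X}
    (hs : s ∘ σ = s) : Commute (rooted σ) (ofSections s) := by
  rw [Commute, SemiconjBy, ofSections_mul_rooted, hs]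

theorem rooted_mul_ofSections_sq {σ : Equiv.Perm X} (hσ : σ ^ 2 = 1)
    (s : X → Equiv.Perm (List X)) :
    (rooted σ * ofSections s) ^ 2 = ofSections (s ∘ σ * s) := by
  calc (rooted σ * ofSections s) ^ 2
      = rooted σ * (ofSections s * rooted σ) * ofSections s := by rw [sq]; group
    _ = rooted (σ ^ 2) * (ofSections (s ∘ σ) * ofSections s) := by
      rw [ofSections_mul_rooted, map_pow, sq]; group
    _ = ofSections (s ∘ σ * s) := by rw [hσ, map_one, one_mul, map_mul]

theorem rooted_mul_ofSections_ne_one {σ : Equiv.Perm X} (hσ : σ ≠ 1)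
    (s : X → Equiv.Perm (List X)) : rooted σ * ofSections s ≠ 1 := by
  contrapose! hσ
  ext x
  have hx : σ x :: s x [] = [x] := DFunLike.congr_fun hσ [x]
  exact (List.cons.inj hx).1

theorem ofSections_injective : Function.Injective (ofSections (X := X)) := by
  intro s t hst
  ext1 x
  ext1 w
  have hxw : x :: s x w = x :: t x w := DFunLike.congr_fun hst (x :: w)
  exact (List.cons.inj hxw).2

theorem ofSections_ne_one {s : X → Equiv.Perm (List X)} {x : X} (hx : s x ≠ 1) :
    ofSections s ≠ 1 := by
  intro hs
  rw [ofSections_injective (hs.trans (map_one _).symm)] at hx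
  exact hx rfl

theorem eq_one_of_sections_mem_closure {R : Set (Equiv.Perm (List X))}
    (hR : ∀ g ∈ R, ∃ s, g = ofSections s ∧ ∀ x, s x ∈ Subgroup.closure R) :
    ∀ g ∈ R, g = 1 := by
  suffices hfix : ∀ w : List X, ∀ g ∈ R, g w = w from fun g hg => Equiv.ext fun w => hfix w g hg
  intro w
  induction w with
  | nil =>
    intro g hg
    obtain ⟨s, rfl, -⟩ := hR g hg
    rfl
  | cons x w ih =>
    intro g hg
    obtain ⟨s, rfl, hs⟩ := hR g hg
    have hle : Subgroup.closure R ≤ MulAction.stabilizer (Equiv.Perm (List X)) w :=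
      (Subgroup.closure_le _).2 ih
    rw [ofSections_apply_cons, show s x w = w from hle (hs x)]

end Sections

theorem permSigma_involutive : Function.Involutive permSigma := by
  intro x
  fin_cases x <;> rfl

/-- `permSigma` as a permutation. -/
def sigmaPerm : Equiv.Perm Alph := permSigma_involutive.toPerm

theorem permPi_involutive : Function.Involutive permPi := by
  intro x
  fin_cases x <;> rfl

/-- `permPi` as a permutation. -/
def piPerm : Equiv.Perm Alph := permPi_involutive.toPerm

theorem sigmaPerm_sq : sigmaPerm ^ 2 = 1 := by decide

theorem piPerm_sq : piPerm ^ 2 = 1 := by decide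

theorem sigmaPerm_ne_one : sigmaPerm ≠ 1 := by decide

theorem piPerm_ne_one : piPerm ≠ 1 := by decide

theorem piPerm_mul_sigmaPerm_sq : (piPerm * sigmaPerm) ^ 2 = 1 := by decide

theorem commute_piPerm_sigmaPerm : Commute piPerm sigmaPerm := by
  rw [commute_iff_eq]
  decide

namespace NekSystem

variable (S : NekSystem)

theorem α_eq_rooted : S.α = rooted sigmaPerm := eq_rooted S.hαnil S.hα

theorem a_eq_rooted : S.a = rooted piPerm := eq_rooted S.hanil S.ha

theorem β_eq_ofSections : S.β = ofSections ![S.α, S.γ, S.α, S.γ] :=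
  eq_ofSections S.hβnil fun x w => by
    fin_cases x
    exacts [S.hβ0 w, S.hβ1 w, S.hβ2 w, S.hβ3 w]

theorem γ_eq_ofSections : S.γ = ofSections ![S.β, 1, 1, S.β] :=
  eq_ofSections S.hγnil fun x w => by
    fin_cases x
    exacts [S.hγ0 w, S.hγ1 w, S.hγ2 w, S.hγ3 w]

theorem b_eq_ofSections : S.b = ofSections ![S.a * S.α, S.a * S.α, S.c, S.c] :=
  eq_ofSections S.hbnil fun x w => by
    fin_cases x
    exacts [S.hb0 w, S.hb1 w, S.hb2 w, S.hb3 w]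

theorem c_eq_ofSections : S.c = ofSections ![S.b * S.β, S.b * S.β, S.b, S.b] :=
  eq_ofSections S.hcnil fun x w => by
    fin_cases x
    exacts [S.hc0 w, S.hc1 w, S.hc2 w, S.hc3 w]

theorem a_mul_α_eq_rooted : S.a * S.α = rooted (piPerm * sigmaPerm) := by
  rw [map_mul, a_eq_rooted, α_eq_rooted]

theorem α_sq : S.α ^ 2 = 1 := by
  rw [α_eq_rooted, ← map_pow, sigmaPerm_sq, map_one]

theorem a_mul_α_sq : (S.a * S.α) ^ 2 = 1 := by
  rw [a_mul_α_eq_rooted, ← map_pow, piPerm_mul_sigmaPerm_sq, map_one]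

theorem β_sq : S.β ^ 2 = 1 := by
  let R : Set (Equiv.Perm Word) := {S.β ^ 2, S.γ ^ 2}
  have hβ : S.β ^ 2 ∈ R := Or.inl rfl
  have hγ : S.γ ^ 2 ∈ R := Or.inr rfl
  suffices hR : ∀ g ∈ R, g = 1 from hR _ hβ
  refine eq_one_of_sections_mem_closure ?_
  rintro g (rfl | rfl)
  · refine ⟨![S.α, S.γ, S.α, S.γ] ^ 2, by rw [map_pow, ← β_eq_ofSections], fun x => ?_⟩
    fin_cases x <;> simp [α_sq, Subgroup.mem_closure_of_mem hγ]
  · refine ⟨![S.β, 1, 1, S.β] ^ 2, by rw [map_pow, ← γ_eq_ofSections], fun x => ?_⟩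
    fin_cases x <;> simp [Subgroup.mem_closure_of_mem hβ]

theorem commute_a_α : Commute S.a S.α := by
  rw [a_eq_rooted, α_eq_rooted]
  exact commute_piPerm_sigmaPerm.map rooted

theorem commute_α_c : Commute S.α S.c := by
  rw [α_eq_rooted, c_eq_ofSections]
  exact commute_rooted_ofSections (by ext1 x; fin_cases x <;> rfl)

theorem commute_a_mul_α_γ : Commute (S.a * S.α) S.γ := by
  rw [a_mul_α_eq_rooted, γ_eq_ofSections]
  exact commute_rooted_ofSections (by ext1 x; fin_cases x <;> rfl)

open scoped commutatorElement in
theorem commute_b_β_and_commute_c_γ : Commute S.b S.β ∧ Commute S.c S.γ := by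
  let R : Set (Equiv.Perm Word) := {⁅S.b, S.β⁆, ⁅S.c, S.γ⁆}
  have hbβ : ⁅S.b, S.β⁆ ∈ R := Or.inl rfl
  have hcγ : ⁅S.c, S.γ⁆ ∈ R := Or.inr rfl
  suffices hR : ∀ g ∈ R, g = 1 from
    ⟨commutatorElement_eq_one_iff_commute.1 (hR _ hbβ),
      commutatorElement_eq_one_iff_commute.1 (hR _ hcγ)⟩
  have haα : ⁅S.a * S.α, S.α⁆ = 1 := (S.commute_a_α.mul_left (Commute.refl _)).commutator_eq
  have haαγ : ⁅S.a * S.α, S.γ⁆ = 1 := S.commute_a_mul_α_γ.commutator_eq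
  have hcα : ⁅S.c, S.α⁆ = 1 := S.commute_α_c.symm.commutator_eq
  have hbββ : ⁅S.b * S.β, S.β⁆ = ⁅S.b, S.β⁆ := by simp only [commutatorElement_def]; group
  refine eq_one_of_sections_mem_closure ?_
  rintro g (rfl | rfl)
  · refine ⟨_, by rw [b_eq_ofSections, β_eq_ofSections, commutatorElement_ofSections], fun x => ?_⟩
    fin_cases x <;> simp [haα, haαγ, hcα, Subgroup.mem_closure_of_mem hcγ]
  · refine ⟨_, by rw [c_eq_ofSections, γ_eq_ofSections, commutatorElement_ofSections], fun x => ?_⟩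
    fin_cases x <;> simp [hbββ, Subgroup.mem_closure_of_mem hbβ]

theorem commute_b_β : Commute S.b S.β := S.commute_b_β_and_commute_c_γ.1

theorem commute_c_γ : Commute S.c S.γ := S.commute_b_β_and_commute_c_γ.2

theorem b_sq_and_c_sq : S.b ^ 2 = 1 ∧ S.c ^ 2 = 1 := by
  let R : Set (Equiv.Perm Word) := {S.b ^ 2, S.c ^ 2}
  have hb : S.b ^ 2 ∈ R := Or.inl rfl
  have hc : S.c ^ 2 ∈ R := Or.inr rfl
  suffices hR : ∀ g ∈ R, g = 1 from ⟨hR _ hb, hR _ hc⟩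
  have hbβ : (S.b * S.β) ^ 2 = S.b ^ 2 := by rw [S.commute_b_β.mul_pow, β_sq, mul_one]
  refine eq_one_of_sections_mem_closure ?_
  rintro g (rfl | rfl)
  · refine ⟨![S.a * S.α, S.a * S.α, S.c, S.c] ^ 2, by rw [map_pow, ← b_eq_ofSections], fun x => ?_⟩
    fin_cases x <;> simp [a_mul_α_sq, Subgroup.mem_closure_of_mem hc]
  · refine ⟨![S.b * S.β, S.b * S.β, S.b, S.b] ^ 2, by rw [map_pow, ← c_eq_ofSections], fun x => ?_⟩
    fin_cases x <;> simp [hbβ, Subgroup.mem_closure_of_mem hb]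

theorem b_sq : S.b ^ 2 = 1 := S.b_sq_and_c_sq.1

theorem c_sq : S.c ^ 2 = 1 := S.b_sq_and_c_sq.2

theorem b_mul_β_sq : (S.b * S.β) ^ 2 = 1 := by
  rw [S.commute_b_β.mul_pow, b_sq, β_sq, one_mul]

theorem a_mul_c_sq : (S.a * S.c) ^ 2 = ofSections fun _ => S.β := by
  have hbβb : S.b * S.β * S.b = S.β := by
    rw [S.commute_b_β.eq, mul_assoc, ← sq, b_sq, mul_one]
  rw [a_eq_rooted, c_eq_ofSections, rooted_mul_ofSections_sq piPerm_sq]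
  congr 1
  ext1 x
  fin_cases x <;> simp [piPerm, permPi, hbβb, ← mul_assoc, ← sq, b_sq]

theorem α_mul_γ_sq : (S.α * S.γ) ^ 2 = ofSections fun _ => S.β := by
  rw [α_eq_rooted, γ_eq_ofSections, rooted_mul_ofSections_sq sigmaPerm_sq]
  congr 1
  ext1 x
  fin_cases x <;> simp [sigmaPerm, permSigma]

theorem α_mul_γ_pow_four : (S.α * S.γ) ^ 4 = 1 := by
  calc (S.α * S.γ) ^ 4 = ((S.α * S.γ) ^ 2) ^ 2 := pow_mul _ 2 2
    _ = ofSections fun _ => S.β ^ 2 := by rw [α_mul_γ_sq, ← map_pow]; rfl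
    _ = 1 := by rw [β_sq]; exact map_one ofSections

theorem γ_mul_α_sq : (S.γ * S.α) ^ 2 = (S.α * S.γ) ^ 2 := by
  refine mul_pow_eq_of_commute ?_
  rw [α_mul_γ_sq, α_eq_rooted]
  exact commute_rooted_ofSections rfl

theorem c_mul_a_sq : (S.c * S.a) ^ 2 = (S.a * S.c) ^ 2 := by
  refine mul_pow_eq_of_commute ?_
  rw [a_mul_c_sq, a_eq_rooted]
  exact commute_rooted_ofSections rfl

theorem α_mul_β_sq :
    (S.α * S.β) ^ 2 = ofSections ![S.γ * S.α, S.α * S.γ, S.γ * S.α, S.α * S.γ] := by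
  nth_rw 1 [α_eq_rooted]
  rw [β_eq_ofSections, rooted_mul_ofSections_sq sigmaPerm_sq]
  congr 1
  ext1 x
  fin_cases x <;> rfl

theorem α_mul_β_pow_four : (S.α * S.β) ^ 4 = ofSections fun _ => (S.α * S.γ) ^ 2 := by
  rw [pow_mul _ 2 2, α_mul_β_sq, ← map_pow]
  congr 1
  ext1 x
  fin_cases x <;> simp [γ_mul_α_sq]

theorem a_mul_b_sq : (S.a * S.b) ^ 2 =
    ofSections ![S.c * (S.a * S.α), S.c * (S.a * S.α), S.a * S.α * S.c, S.a * S.α * S.c] := by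
  nth_rw 1 [a_eq_rooted]
  rw [b_eq_ofSections, rooted_mul_ofSections_sq piPerm_sq]
  congr 1
  ext1 x
  fin_cases x <;> rfl

theorem a_mul_α_mul_c_sq : (S.a * S.α * S.c) ^ 2 = (S.a * S.c) ^ 2 := by
  rw [mul_assoc, S.commute_α_c.eq, ← mul_assoc,
    (S.commute_a_α.mul_left S.commute_α_c.symm).mul_pow, α_sq, mul_one]

theorem c_mul_a_mul_α_sq : (S.c * (S.a * S.α)) ^ 2 = (S.a * S.c) ^ 2 := by
  rw [← mul_assoc, (S.commute_α_c.symm.mul_left S.commute_a_α).mul_pow, α_sq, mul_one, c_mul_a_sq]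

theorem a_mul_b_pow_four : (S.a * S.b) ^ 4 = ofSections fun _ => (S.a * S.c) ^ 2 := by
  rw [pow_mul _ 2 2, a_mul_b_sq, ← map_pow]
  congr 1
  ext1 x
  fin_cases x <;> simp [a_mul_α_mul_c_sq, c_mul_a_mul_α_sq]

theorem a_mul_c_mul_γ_sq : (S.a * S.c * S.γ) ^ 2 = 1 := by
  have hcγ : S.c * S.γ = ofSections ![S.b, S.b * S.β, S.b, S.b * S.β] := by
    rw [c_eq_ofSections, γ_eq_ofSections, ← map_mul]
    congr 1
    ext1 x
    fin_cases x <;> simp [mul_assoc, ← sq, β_sq]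
  rw [mul_assoc, a_eq_rooted, hcγ, rooted_mul_ofSections_sq piPerm_sq, ← map_one ofSections]
  congr 1
  ext1 x
  fin_cases x <;> simp [piPerm, permPi, ← sq, b_sq, b_mul_β_sq]

theorem a_mul_α_mul_b_mul_β_sq : (S.a * S.α * S.b * S.β) ^ 2 =
    ofSections ![S.c * S.γ * S.a, S.c * (S.a * S.γ), S.γ * (S.a * S.c), S.a * (S.c * S.γ)] := by
  have hbβ : S.b * S.β = ofSections ![S.a, S.a * S.α * S.γ, S.c * S.α, S.c * S.γ] := by
    rw [b_eq_ofSections, β_eq_ofSections, ← map_mul]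
    congr 1
    ext1 x
    fin_cases x <;> simp [mul_assoc, ← sq, α_sq]
  have hcα_aαγ : S.c * S.α * (S.a * S.α * S.γ) = S.c * (S.a * S.γ) := by
    calc S.c * S.α * (S.a * S.α * S.γ) = S.c * S.α ^ 2 * (S.a * S.γ) := by
          rw [S.commute_a_α.eq, sq]; group
      _ = S.c * (S.a * S.γ) := by rw [α_sq, mul_one]
  have haαγ_cα : S.a * S.α * S.γ * (S.c * S.α) = S.γ * (S.a * S.c) := by
    calc S.a * S.α * S.γ * (S.c * S.α) = S.γ * S.a * S.α ^ 2 * S.c := by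
          rw [S.commute_a_mul_α_γ.eq, ← S.commute_α_c.eq, sq]; group
      _ = S.γ * (S.a * S.c) := by rw [α_sq, mul_one, mul_assoc]
  rw [mul_assoc, a_mul_α_eq_rooted, hbβ, rooted_mul_ofSections_sq piPerm_mul_sigmaPerm_sq]
  congr 1
  ext1 x
  fin_cases x
  exacts [rfl, hcα_aαγ, haαγ_cα, rfl]

theorem a_mul_α_mul_b_mul_β_pow_four : (S.a * S.α * S.b * S.β) ^ 4 = 1 := by
  have hacγ : (S.a * (S.c * S.γ)) ^ 2 = 1 := by rw [← mul_assoc, a_mul_c_mul_γ_sq]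
  have hcγa : (S.c * S.γ * S.a) ^ 2 = 1 := mul_pow_eq_one_comm.1 hacγ
  have hγac : (S.γ * (S.a * S.c)) ^ 2 = 1 := mul_pow_eq_one_comm.1 S.a_mul_c_mul_γ_sq
  have hcaγ : (S.c * (S.a * S.γ)) ^ 2 = 1 :=
    mul_pow_eq_one_comm.1 (by rw [mul_assoc, ← S.commute_c_γ.eq, hacγ])
  rw [pow_mul _ 2 2, a_mul_α_mul_b_mul_β_sq, ← map_pow, ← map_one ofSections]
  congr 1
  ext1 x
  fin_cases x
  exacts [hcγa, hcaγ, hγac, hacγ]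

theorem b_mul_c_eq_ofSections : S.b * S.c = ofSections
    ![S.a * S.α * S.b * S.β, S.a * S.α * S.b * S.β, S.c * S.b, S.c * S.b] := by
  calc S.b * S.c
      = ofSections (![S.a * S.α, S.a * S.α, S.c, S.c] * ![S.b * S.β, S.b * S.β, S.b, S.b]) := by
        rw [map_mul, ← b_eq_ofSections, ← c_eq_ofSections]
    _ = _ := by
      congr 1
      ext1 x
      fin_cases x <;> rfl

theorem c_mul_b_eq_inv : S.c * S.b = (S.b * S.c)⁻¹ := by
  rw [mul_inv_rev, inv_eq_of_mul_eq_one_right ((sq _).symm.trans S.b_sq),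
    inv_eq_of_mul_eq_one_right ((sq _).symm.trans S.c_sq)]

theorem b_mul_c_pow_four : (S.b * S.c) ^ 4 = 1 := by
  refine eq_one_of_sections_mem_closure (R := {(S.b * S.c) ^ 4}) ?_ _ rfl
  rintro g rfl
  refine ⟨![S.a * S.α * S.b * S.β, S.a * S.α * S.b * S.β, S.c * S.b, S.c * S.b] ^ 4,
    by rw [map_pow, ← b_mul_c_eq_ofSections], fun x => ?_⟩
  have hinv : (S.c * S.b) ^ 4 ∈ Subgroup.closure {(S.b * S.c) ^ 4} := by
    rw [c_mul_b_eq_inv, inv_pow]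
    exact inv_mem (Subgroup.mem_closure_of_mem rfl)
  fin_cases x <;> simp [a_mul_α_mul_b_mul_β_pow_four, hinv]

theorem α_ne_one : S.α ≠ 1 := by
  simpa [α_eq_rooted] using rooted_mul_ofSections_ne_one sigmaPerm_ne_one 1

theorem β_ne_one : S.β ≠ 1 := by
  rw [β_eq_ofSections]
  exact ofSections_ne_one (x := 0) S.α_ne_one

theorem a_mul_c_mul_γ_ne_one : S.a * S.c * S.γ ≠ 1 := by
  rw [a_eq_rooted, c_eq_ofSections, γ_eq_ofSections, mul_assoc, ← map_mul]
  exact rooted_mul_ofSections_ne_one piPerm_ne_one _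

theorem a_mul_c_sq_ne_one : (S.a * S.c) ^ 2 ≠ 1 := by
  rw [a_mul_c_sq]
  exact ofSections_ne_one (x := 0) S.β_ne_one

theorem a_mul_b_pow_four_ne_one : (S.a * S.b) ^ 4 ≠ 1 := by
  rw [a_mul_b_pow_four]
  exact ofSections_ne_one (x := 0) S.a_mul_c_sq_ne_one

theorem a_mul_α_mul_b_mul_β_sq_ne_one : (S.a * S.α * S.b * S.β) ^ 2 ≠ 1 := by
  rw [a_mul_α_mul_b_mul_β_sq]
  exact ofSections_ne_one (x := 3) (mul_assoc S.a S.c S.γ ▸ S.a_mul_c_mul_γ_ne_one)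

theorem b_mul_c_sq_ne_one : (S.b * S.c) ^ 2 ≠ 1 := by
  rw [b_mul_c_eq_ofSections, ← map_pow]
  exact ofSections_ne_one (x := 0) S.a_mul_α_mul_b_mul_β_sq_ne_one

theorem a_mul_c_sq_eq_α_mul_γ_sq : (S.a * S.c) ^ 2 = (S.α * S.γ) ^ 2 := by
  rw [a_mul_c_sq, α_mul_γ_sq]

theorem a_mul_b_pow_four_eq_α_mul_β_pow_four : (S.a * S.b) ^ 4 = (S.α * S.β) ^ 4 := by
  rw [a_mul_b_pow_four, α_mul_β_pow_four, a_mul_c_sq_eq_α_mul_γ_sq]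

theorem a_mul_c_pow_four : (S.a * S.c) ^ 4 = 1 := by
  rw [pow_mul _ 2 2, a_mul_c_sq_eq_α_mul_γ_sq, ← pow_mul, α_mul_γ_pow_four]

theorem a_mul_b_pow_eight : (S.a * S.b) ^ 8 = 1 := by
  calc (S.a * S.b) ^ 8 = ((S.a * S.b) ^ 4) ^ 2 := pow_mul _ 4 2
    _ = ofSections fun _ => ((S.a * S.c) ^ 2) ^ 2 := by rw [a_mul_b_pow_four, ← map_pow]; rfl
    _ = 1 := by rw [← pow_mul, a_mul_c_pow_four]; exact map_one ofSections

end NekSystem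

/-- Relations (a∘c)² = (α∘γ)², (a∘b)⁴ = (α∘β)⁴, (b∘c)⁴ = id; the orders of
a∘b, a∘c, b∘c are 8, 4, 4, and the orders of a∘c∘γ and a∘α∘b∘β are 2 and 4. -/
theorem statement3 (S : NekSystem) :
    (S.a * S.c) ^ 2 = (S.α * S.γ) ^ 2 ∧
    (S.a * S.b) ^ 4 = (S.α * S.β) ^ 4 ∧
    (S.b * S.c) ^ 4 = 1 ∧
    orderOf (S.a * S.b) = 8 ∧
    orderOf (S.a * S.c) = 4 ∧
    orderOf (S.b * S.c) = 4 ∧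
    orderOf (S.a * S.c * S.γ) = 2 ∧
    orderOf (S.a * S.α * S.b * S.β) = 4 := by
  refine ⟨S.a_mul_c_sq_eq_α_mul_γ_sq, S.a_mul_b_pow_four_eq_α_mul_β_pow_four, S.b_mul_c_pow_four,
    ?_, ?_, ?_, ?_, ?_⟩
  · exact orderOf_eq_prime_pow (p := 2) (n := 2) S.a_mul_b_pow_four_ne_one S.a_mul_b_pow_eight
  · exact orderOf_eq_prime_pow (p := 2) (n := 1) S.a_mul_c_sq_ne_one S.a_mul_c_pow_four
  · exact orderOf_eq_prime_pow (p := 2) (n := 1) S.b_mul_c_sq_ne_one S.b_mul_c_pow_four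
  · exact orderOf_eq_prime S.a_mul_c_mul_γ_sq S.a_mul_c_mul_γ_ne_one
  · exact orderOf_eq_prime_pow (p := 2) (n := 1) S.a_mul_α_mul_b_mul_β_sq_ne_one
      S.a_mul_α_mul_b_mul_β_pow_four
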